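/- arXiv:1205.4380 — 4 statements merged into one kernel-verified Lean document; each statement's English description precedes it below -/
import Mathlib

section
/- Let N ≥ 2 and let A be an N×N matrix over ℂ. Write sum(adj(E − A·z)·A) = m_0 + m_1 z + ⋯ + m_{N−1} z^{N−1} and det(E − A·z) = d_0 + d_1 z + ⋯ + d_N z^N as polynomials in z. Then m_{N−1} = (−1)^{N+1} · N · det A and m_{N−2} = (−1)^{N−1} · sum(adj(A)) − N · d_{N−1}. -/
open Polynomial Matrix

theorem aux_form {n m : ℕ} (A : Matrix (Fin n) (Fin n) ℂ) (f g : Fin m → Fin n) :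
    ((1 : Matrix (Fin n) (Fin n) ℂ[X]) - (X : ℂ[X]) • A.map C).submatrix f g =
      (X : ℂ[X]) • ((-A).submatrix f g).map C +
        ((1 : Matrix (Fin n) (Fin n) ℂ).submatrix f g).map C := by
  ext1 i j
  by_cases h : f i = g j <;> simp [Matrix.one_apply, h] <;> ring

theorem aux_deg {n m : ℕ} (A : Matrix (Fin n) (Fin n) ℂ) (f g : Fin m → Fin n) :
    (((1 : Matrix (Fin n) (Fin n) ℂ[X]) - (X : ℂ[X]) • A.map C).submatrix f g).det.natDegree
      ≤ m := by
  rw [aux_form]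
  simpa using Polynomial.natDegree_det_X_add_C_le ((-A).submatrix f g)
    ((1 : Matrix (Fin n) (Fin n) ℂ).submatrix f g)

theorem aux_coeff {n m : ℕ} (A : Matrix (Fin n) (Fin n) ℂ) (f g : Fin m → Fin n) :
    (((1 : Matrix (Fin n) (Fin n) ℂ[X]) - (X : ℂ[X]) • A.map C).submatrix f g).det.coeff m
      = (-1) ^ m * (A.submatrix f g).det := by
  rw [aux_form]
  have := Polynomial.coeff_det_X_add_C_card ((-A).submatrix f g)
    ((1 : Matrix (Fin n) (Fin n) ℂ).submatrix f g)
  rw [Fintype.card_fin] at this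
  rw [this, Matrix.submatrix_neg, Pi.neg_apply, Pi.neg_apply, Matrix.det_neg, Fintype.card_fin]

theorem aux_adj {n : ℕ} (A : Matrix (Fin (n+1)) (Fin (n+1)) ℂ) (i j : Fin (n+1)) :
    ((Matrix.adjugate ((1 : Matrix (Fin (n+1)) (Fin (n+1)) ℂ[X]) -
      (X : ℂ[X]) • A.map C)) i j).coeff n = (-1) ^ n * A.adjugate i j ∧
    ((Matrix.adjugate ((1 : Matrix (Fin (n+1)) (Fin (n+1)) ℂ[X]) -
      (X : ℂ[X]) • A.map C)) i j).coeff (n+1) = 0 := by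
  rw [Matrix.adjugate_fin_succ_eq_det_submatrix, Matrix.adjugate_fin_succ_eq_det_submatrix]
  have e : ((-1 : ℂ[X]) ^ ((j : ℕ) + i)) = C ((-1) ^ ((j : ℕ) + i)) := by simp
  rw [e, coeff_C_mul, coeff_C_mul, aux_coeff,
    coeff_eq_zero_of_natDegree_lt (Nat.lt_succ_of_le (aux_deg A _ _))]
  constructor <;> ring

theorem aux_main {n : ℕ} (A : Matrix (Fin n) (Fin n) ℂ) :
    X * (∑ i, ∑ j, (Matrix.adjugate ((1 : Matrix (Fin n) (Fin n) ℂ[X]) -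
        (X : ℂ[X]) • A.map C) * A.map C) i j) =
    (∑ i, ∑ j, (Matrix.adjugate ((1 : Matrix (Fin n) (Fin n) ℂ[X]) -
        (X : ℂ[X]) • A.map C)) i j) - C (n : ℂ) * (Matrix.det ((1 : Matrix (Fin n) (Fin n) ℂ[X]) -
          (X : ℂ[X]) • A.map C)) := by
  set B := A.map C
  set M := (1 : Matrix (Fin n) (Fin n) ℂ[X]) - (X : ℂ[X]) • B with hM
  have h : (X : ℂ[X]) • (M.adjugate * B) = M.adjugate - M.det • 1 := by
    rw [← Matrix.adjugate_mul, ← Matrix.mul_smul]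
    nth_rewrite 3 [hM]
    rw [Matrix.mul_sub, Matrix.mul_one, sub_sub_cancel]
  have h2 : ∀ i j, X * (M.adjugate * B) i j
      = M.adjugate i j - M.det * (1 : Matrix (Fin n) (Fin n) ℂ[X]) i j := fun i j => by
    simpa using congrFun (congrFun h i) j
  simp_rw [Finset.mul_sum, h2, Finset.sum_sub_distrib, ← Finset.mul_sum]
  simp [Matrix.one_apply, mul_comm]

/-- For an `N × N` complex matrix `A` (with `N ≥ 2`), writing
`sum(adj(E - A·z)·A) = m_0 + ⋯ + m_{N-1} z^{N-1}` and `det(E - A·z) = d_0 + ⋯ + d_N z^N`,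
we have `m_{N-1} = (-1)^{N+1} · N · det A` and
`m_{N-2} = (-1)^{N-1} · sum(adj A) - N · d_{N-1}`. -/
theorem coeff_sum_adjugate_mul_one_sub_smul
    (N : ℕ) (hN : 2 ≤ N) (A : Matrix (Fin N) (Fin N) ℂ) :
    (∑ i, ∑ j, (Matrix.adjugate ((1 : Matrix (Fin N) (Fin N) ℂ[X]) -
        (Polynomial.X : ℂ[X]) • A.map Polynomial.C) * A.map Polynomial.C) i j).coeff (N - 1) =
      (-1) ^ (N + 1) * N * A.det ∧
    (∑ i, ∑ j, (Matrix.adjugate ((1 : Matrix (Fin N) (Fin N) ℂ[X]) -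
        (Polynomial.X : ℂ[X]) • A.map Polynomial.C) * A.map Polynomial.C) i j).coeff (N - 2) =
      (-1) ^ (N - 1) * (∑ i, ∑ j, A.adjugate i j) -
        N * (Matrix.det ((1 : Matrix (Fin N) (Fin N) ℂ[X]) -
          (Polynomial.X : ℂ[X]) • A.map Polynomial.C)).coeff (N - 1) := by
  obtain ⟨n, rfl⟩ : ∃ n, N = n + 2 := ⟨N - 2, by omega⟩
  have hm := aux_main A
  have h1 := congrArg (fun p => p.coeff (n + 2)) hm
  have h2 := congrArg (fun p => p.coeff (n + 1)) hm
  have hd := aux_coeff A id id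
  simp only [Matrix.submatrix_id_id] at hd
  simp only [coeff_X_mul, coeff_sub, coeff_C_mul] at h1 h2
  rw [hd] at h1
  rw [show n + 2 - 1 = n + 1 from rfl, show n + 2 - 2 = n from rfl, h1, h2]
  constructor
  · simp only [finset_sum_coeff, (aux_adj A _ _).2]
    simp
    ring
  · simp only [finset_sum_coeff, (aux_adj A _ _).1, ← Finset.mul_sum]
end

section
/- Let N ≥ 1 and let A be an N×N matrix over ℂ with det A ≠ 0. Suppose α_1, …, α_n are pairwise distinct nonzero complex numbers and e_1, …, e_n ≥ 1 are integers such that det(E − A·z) = (−1)^N · det A · Π_{k=1}^n (z − α_k)^{e_k} as polynomials in z, and suppose A_{k,j} (for 1 ≤ k ≤ n, 1 ≤ j ≤ e_k) are complex numbers such that for every complex z ∉ {α_1, …, α_n}: sum(adj(E − A·z)·A)/det(E − A·z) = (1/((−1)^N det A)) · Σ_{k=1}^n Σ_{j=1}^{e_k} A_{k,j}/(z − α_k)^j. Then Σ_{k=1}^n A_{k,1} = (−1)^{N+1} · N · det A; equivalently, Σ_{k=1}^n (−A_{k,1}/((−1)^N det A)) = N. -/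
open Polynomial Matrix

/-- Let `A` be an `N × N` complex matrix (`N ≥ 1`) with `det A ≠ 0`. Suppose
`det(E - A·z) = (-1)^N · det A · Π_k (z - α_k)^{e_k}` with the `α_k` pairwise distinct and
nonzero and `e_k ≥ 1`, and suppose the `A_{k,j}` give a partial fraction decomposition of
`sum(adj(E - A·z)·A)/det(E - A·z)` for all `z` away from the `α_k`. Then
`Σ_k A_{k,1} = (-1)^{N+1} · N · det A`; equivalently
`Σ_k (-A_{k,1}/((-1)^N det A)) = N`. -/
theorem sum_partial_fraction_residues
    (N n : ℕ) (hN : 1 ≤ N) (A : Matrix (Fin N) (Fin N) ℂ) (hA : A.det ≠ 0)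
    (α : Fin n → ℂ) (hα : ∀ k, α k ≠ 0) (hinj : Function.Injective α)
    (e : Fin n → ℕ) (he : ∀ k, 1 ≤ e k)
    (hfact : Matrix.det ((1 : Matrix (Fin N) (Fin N) ℂ[X]) -
        (Polynomial.X : ℂ[X]) • A.map Polynomial.C) =
      Polynomial.C ((-1) ^ N * A.det) *
        ∏ k, (Polynomial.X - Polynomial.C (α k)) ^ (e k))
    (B : Fin n → ℕ → ℂ)
    (hpart : ∀ z : ℂ, (∀ k, z ≠ α k) →
      (∑ i, ∑ j, (Matrix.adjugate ((1 : Matrix (Fin N) (Fin N) ℂ) - z • A) * A) i j) /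
          Matrix.det ((1 : Matrix (Fin N) (Fin N) ℂ) - z • A) =
        (1 / ((-1) ^ N * A.det)) *
          ∑ k, ∑ j ∈ Finset.Icc 1 (e k), B k j / (z - α k) ^ j) :
    (∑ k, B k 1) = (-1) ^ (N + 1) * N * A.det ∧
      (∑ k, -(B k 1) / ((-1) ^ N * A.det)) = N := by
  set c : ℂ := (-1) ^ N * A.det with hc
  have hc0 : c ≠ 0 := mul_ne_zero (pow_ne_zero _ (by norm_num)) hA
  let F : ℂ → ℂ := fun w => -((∑ i, ∑ j, (Matrix.adjugate (A - w • (1 : Matrix (Fin N) (Fin N) ℂ)) * A) i j) /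
      Matrix.det (A - w • (1 : Matrix (Fin N) (Fin N) ℂ)))
  let G : ℂ → ℂ := fun w => (1 / c) *
      ∑ k, ∑ j ∈ Finset.Icc 1 (e k), B k j * w ^ (j - 1) / (1 - w * α k) ^ j
  have hm : Continuous (fun w : ℂ => A - w • (1 : Matrix (Fin N) (Fin N) ℂ)) := by fun_prop
  have hF : ContinuousAt F 0 := by
    refine ContinuousAt.neg (ContinuousAt.div ?_ ?_ (by simpa using hA))
    · refine Continuous.continuousAt ?_
      refine continuous_finsetSum _ fun i _ => continuous_finsetSum _ fun j _ => ?_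
      exact (hm.matrix_adjugate.matrix_mul continuous_const).matrix_elem i j
    · exact hm.matrix_det.continuousAt
  have hG : ContinuousAt G 0 := by
    refine ContinuousAt.mul continuousAt_const ?_
    refine tendsto_finsetSum _ fun k _ => tendsto_finsetSum _ fun j _ => ?_
    refine ContinuousAt.div (by fun_prop) (by fun_prop) (by simp)
  have hF0 : F 0 = -N := by
    simp only [F, zero_smul, sub_zero, Matrix.adjugate_mul]
    simp [Matrix.one_apply, hA]
  have hG0 : G 0 = (1 / c) * ∑ k, B k 1 := by
    simp only [G]
    congr 1
    refine Finset.sum_congr rfl fun k _ => ?_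
    rw [Finset.sum_eq_single 1]
    · simp
    · intro j hj hj1
      have : j - 1 ≠ 0 := by have := (Finset.mem_Icc.1 hj).1; omega
      simp [this]
    · intro h; exact absurd (Finset.mem_Icc.2 ⟨le_refl 1, he k⟩) h
  have hev : ∀ᶠ w in nhdsWithin (0 : ℂ) {0}ᶜ, F w = G w := by
    have h1 : ∀ᶠ w in nhdsWithin (0 : ℂ) {0}ᶜ, ∀ k, 1 - w * α k ≠ 0 := by
      refine Filter.Eventually.filter_mono nhdsWithin_le_nhds ?_
      rw [Filter.eventually_all]
      intro k
      have : ContinuousAt (fun w : ℂ => 1 - w * α k) 0 := by fun_prop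
      exact this.eventually_ne (by simp)
    filter_upwards [h1, self_mem_nhdsWithin] with w hw hw0
    have hw0 : w ≠ 0 := hw0
    have hz := hpart w⁻¹ (fun k hk => hw k (by rw [← hk, mul_inv_cancel₀ hw0, sub_self]))
    have hmat : (1 : Matrix (Fin N) (Fin N) ℂ) - w⁻¹ • A = (-w⁻¹) • (A - w • (1 : Matrix (Fin N) (Fin N) ℂ)) := by
      rw [smul_sub, smul_smul, neg_mul, inv_mul_cancel₀ hw0, neg_smul, neg_smul, one_smul]
      abel
    have hu : (-w⁻¹) ≠ 0 := neg_ne_zero.2 (inv_ne_zero hw0)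
    have hFz : F w = w⁻¹ * ((∑ i, ∑ j, (Matrix.adjugate ((1 : Matrix (Fin N) (Fin N) ℂ) - w⁻¹ • A) * A) i j) /
          Matrix.det ((1 : Matrix (Fin N) (Fin N) ℂ) - w⁻¹ • A)) := by
      rw [hmat, Matrix.adjugate_smul, Matrix.det_smul]
      simp only [F, Matrix.smul_mul, Matrix.smul_apply, smul_eq_mul, ← Finset.mul_sum, Fintype.card_fin]
      obtain ⟨M, rfl⟩ : ∃ M, N = M + 1 := ⟨N - 1, by omega⟩
      generalize (∑ i, ∑ j, (Matrix.adjugate (A - w • (1 : Matrix (Fin (M+1)) (Fin (M+1)) ℂ)) * A) i j) = S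
      generalize Matrix.det (A - w • (1 : Matrix (Fin (M+1)) (Fin (M+1)) ℂ)) = D
      rw [Nat.add_sub_cancel, pow_succ, mul_assoc, mul_div_mul_left _ _ (pow_ne_zero M hu), neg_mul, div_neg,
        mul_neg, ← mul_div_assoc, mul_div_mul_left _ _ (inv_ne_zero hw0)]
    rw [hFz, hz]
    simp only [G]
    rw [mul_left_comm, Finset.mul_sum]
    congr 1
    refine Finset.sum_congr rfl fun k _ => ?_
    rw [Finset.mul_sum]
    refine Finset.sum_congr rfl fun j hj => ?_
    obtain ⟨m, rfl⟩ : ∃ m, j = m + 1 := ⟨j - 1, by have := (Finset.mem_Icc.1 hj).1; omega⟩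
    have h2 : w⁻¹ - α k = (1 - w * α k) / w := by field_simp
    have h3 := hw k
    rw [h2, div_pow, Nat.add_sub_cancel]
    field_simp
    ring
  have hlim : F 0 = G 0 := by
    refine tendsto_nhds_unique (hF.tendsto.mono_left nhdsWithin_le_nhds) ?_ (l := nhdsWithin (0 : ℂ) {0}ᶜ)
    exact (hG.tendsto.mono_left nhdsWithin_le_nhds).congr' (hev.mono fun _ h => h.symm)
  rw [hF0, hG0] at hlim
  have hS : ∑ k, B k 1 = -N * c := by
    rw [hlim]; field_simp
  constructor
  · rw [hS, hc]; ring
  · rw [← Finset.sum_div, Finset.sum_neg_distrib, hS]; field_simp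
end

section
/- Let N ≥ 1 and let A be an N×N matrix over ℂ with det A ≠ 0. Suppose α_1, …, α_n are pairwise distinct nonzero complex numbers and e_1, …, e_n ≥ 1 are integers such that det(E − A·z) = (−1)^N · det A · Π_{k=1}^n (z − α_k)^{e_k} as polynomials in z, and suppose A_{k,j} (for 1 ≤ k ≤ n, 1 ≤ j ≤ e_k) are complex numbers such that for every complex z ∉ {α_1, …, α_n}: sum(adj(E − A·z)·A)/det(E − A·z) = (1/((−1)^N det A)) · Σ_{k=1}^n Σ_{j=1}^{e_k} A_{k,j}/(z − α_k)^j. Setting A_{k,2} := 0 whenever e_k = 1, we have Σ_{k=1}^n (−α_k · A_{k,1} − A_{k,2}) = (−1)^N · sum(adj(A)). -/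
open Polynomial Matrix

open Filter Topology in
lemma aux_uniq (f g : ℂ → ℂ) (hf : ContinuousAt f 0) (hg : ContinuousAt g 0)
    (h : ∀ᶠ w in 𝓝[≠] (0:ℂ), f w = g w) : f 0 = g 0 := by
  have h1 : Tendsto f (𝓝[≠] 0) (𝓝 (f 0)) := hf.tendsto.mono_left nhdsWithin_le_nhds
  have h2 : Tendsto g (𝓝[≠] 0) (𝓝 (g 0)) := hg.tendsto.mono_left nhdsWithin_le_nhds
  exact tendsto_nhds_unique (h1.congr' h) h2

lemma aux_cont_inv {N : ℕ} (M : Matrix (Fin N) (Fin N) ℂ) :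
    ContinuousAt (fun w : ℂ => (1 - w • M)⁻¹) 0 := by
  have : (fun w : ℂ => (1 - w • M)⁻¹) =
      fun w : ℂ => ((1 - w • M).det)⁻¹ • (1 - w • M).adjugate := by
    funext w
    rw [Matrix.inv_def, Ring.inverse_eq_inv]
  rw [this]
  have hc : Continuous (fun w : ℂ => 1 - w • M) := by fun_prop
  refine ContinuousAt.smul (ContinuousAt.inv₀ hc.matrix_det.continuousAt (by simp)) ?_
  exact hc.matrix_adjugate.continuousAt

lemma aux_cont_sum {N : ℕ} (f : ℂ → Matrix (Fin N) (Fin N) ℂ) (hf : ContinuousAt f 0) :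
    ContinuousAt (fun w => ∑ i, ∑ j, f w i j) 0 := by
  have h : Continuous (fun X : Matrix (Fin N) (Fin N) ℂ => ∑ i, ∑ j, X i j) := by fun_prop
  exact h.continuousAt.comp hf

lemma aux_lhs {N : ℕ} (A : Matrix (Fin N) (Fin N) ℂ) (hA : A.det ≠ 0) (w : ℂ) (hw : w ≠ 0)
    (hd : (1 - w • A⁻¹).det ≠ 0) :
    (∑ i, ∑ j, (Matrix.adjugate ((1 : Matrix (Fin N) (Fin N) ℂ) - w⁻¹ • A) * A) i j) /
          Matrix.det ((1 : Matrix (Fin N) (Fin N) ℂ) - w⁻¹ • A) =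
      - w * ∑ i, ∑ j, ((1 - w • A⁻¹)⁻¹) i j := by
  have hAu : IsUnit A.det := isUnit_iff_ne_zero.mpr hA
  have hdu : IsUnit (1 - w • A⁻¹).det := isUnit_iff_ne_zero.mpr hd
  have hX : (1 : Matrix (Fin N) (Fin N) ℂ) - w⁻¹ • A = (-w⁻¹) • (A * (1 - w • A⁻¹)) := by
    rw [mul_sub, Matrix.mul_smul, Matrix.mul_nonsing_inv _ hAu, smul_sub, smul_smul, mul_one]
    have : -w⁻¹ * w = -1 := by field_simp
    rw [this, neg_smul, neg_smul, one_smul]; abel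
  have hinv : (1 - w⁻¹ • A)⁻¹ = (-w) • ((1 - w • A⁻¹)⁻¹ * A⁻¹) := by
    apply Matrix.inv_eq_left_inv
    rw [hX, Matrix.smul_mul, Matrix.mul_smul, smul_smul, Matrix.mul_assoc,
      ← Matrix.mul_assoc A⁻¹, Matrix.nonsing_inv_mul _ hAu, Matrix.one_mul,
      Matrix.nonsing_inv_mul _ hdu]
    have : -w * -w⁻¹ = 1 := by field_simp
    rw [this, one_smul]
  have h2 : (1 - w⁻¹ • A)⁻¹ * A = (-w) • (1 - w • A⁻¹)⁻¹ := by
    rw [hinv, Matrix.smul_mul, Matrix.mul_assoc, Matrix.nonsing_inv_mul _ hAu, Matrix.mul_one]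
  rw [Matrix.inv_def, Ring.inverse_eq_inv, Matrix.smul_mul] at h2
  have h3 := congrArg (fun X : Matrix (Fin N) (Fin N) ℂ => ∑ i, ∑ j, X i j) h2
  simp only [Matrix.smul_apply, smul_eq_mul, ← Finset.mul_sum] at h3
  rw [← h3, div_eq_inv_mul]

lemma aux_sub {N : ℕ} (M : Matrix (Fin N) (Fin N) ℂ) (w : ℂ) (hd : (1 - w • M).det ≠ 0) :
    (1 - w • M)⁻¹ - 1 = w • (M * (1 - w • M)⁻¹) := by
  have hdu : IsUnit (1 - w • M).det := isUnit_iff_ne_zero.mpr hd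
  have h := Matrix.mul_nonsing_inv _ hdu
  rw [sub_mul, one_mul, Matrix.smul_mul] at h
  rw [sub_eq_iff_eq_add, ← sub_eq_iff_eq_add', h]

/-- With the same hypotheses as in the partial fraction setup
(`det A ≠ 0`, factorization of `det(E - A·z)`, partial fraction decomposition of
`sum(adj(E - A·z)·A)/det(E - A·z)` with coefficients `A_{k,j}`), and setting `A_{k,2} := 0`
whenever `e_k = 1`, we have
`Σ_k (-α_k · A_{k,1} - A_{k,2}) = (-1)^N · sum(adj A)`. -/
theorem sum_neg_alpha_mul_residue_sub
    (N n : ℕ) (hN : 1 ≤ N) (A : Matrix (Fin N) (Fin N) ℂ) (hA : A.det ≠ 0)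
    (α : Fin n → ℂ) (hα : ∀ k, α k ≠ 0) (hinj : Function.Injective α)
    (e : Fin n → ℕ) (he : ∀ k, 1 ≤ e k)
    (hfact : Matrix.det ((1 : Matrix (Fin N) (Fin N) ℂ[X]) -
        (Polynomial.X : ℂ[X]) • A.map Polynomial.C) =
      Polynomial.C ((-1) ^ N * A.det) *
        ∏ k, (Polynomial.X - Polynomial.C (α k)) ^ (e k))
    (B : Fin n → ℕ → ℂ)
    (hpart : ∀ z : ℂ, (∀ k, z ≠ α k) →
      (∑ i, ∑ j, (Matrix.adjugate ((1 : Matrix (Fin N) (Fin N) ℂ) - z • A) * A) i j) /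
          Matrix.det ((1 : Matrix (Fin N) (Fin N) ℂ) - z • A) =
        (1 / ((-1) ^ N * A.det)) *
          ∑ k, ∑ j ∈ Finset.Icc 1 (e k), B k j / (z - α k) ^ j) :
    (∑ k, (-(α k) * B k 1 - (if e k = 1 then 0 else B k 2))) =
      (-1) ^ N * ∑ i, ∑ j, A.adjugate i j := by
  classical
  set c : ℂ := (-1) ^ N * A.det with hc
  have hc0 : c ≠ 0 := mul_ne_zero (pow_ne_zero _ (by norm_num)) hA
  set M := A⁻¹ with hM
  -- eventual facts
  have hcM : Continuous (fun w : ℂ => (1 - w • M).det) := by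
    have : Continuous (fun w : ℂ => 1 - w • M) := by fun_prop
    exact this.matrix_det
  have ev1 : ∀ᶠ w in nhdsWithin (0:ℂ) {0}ᶜ, (1 - w • M).det ≠ 0 :=
    (hcM.continuousAt.eventually_ne (by simp)).filter_mono nhdsWithin_le_nhds
  have ev2 : ∀ᶠ w in nhdsWithin (0:ℂ) {0}ᶜ, ∀ k, 1 - α k * w ≠ 0 := by
    rw [Filter.eventually_all]
    intro k
    have : Continuous (fun w : ℂ => 1 - α k * w) := by fun_prop
    exact (this.continuousAt.eventually_ne (by simp)).filter_mono nhdsWithin_le_nhds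
  have ev0 : ∀ᶠ w in nhdsWithin (0:ℂ) {0}ᶜ, w ≠ 0 := eventually_mem_nhdsWithin
  have key : ∀ᶠ w in nhdsWithin (0:ℂ) {0}ᶜ, - c * ∑ i, ∑ j, ((1 - w • M)⁻¹) i j =
      ∑ k, ∑ j ∈ Finset.Icc 1 (e k), B k j * (w ^ (j - 1) / (1 - α k * w) ^ j) := by
    filter_upwards [ev0, ev1, ev2] with w h0 h1 h2
    have hp := hpart w⁻¹ (fun k hk => h2 k (by rw [← hk]; field_simp; simp))
    rw [aux_lhs A hA w h0 h1] at hp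
    have hs : ∑ k, ∑ j ∈ Finset.Icc 1 (e k), B k j / (w⁻¹ - α k) ^ j =
        w * ∑ k, ∑ j ∈ Finset.Icc 1 (e k), B k j * (w ^ (j - 1) / (1 - α k * w) ^ j) := by
      simp only [Finset.mul_sum]
      refine Finset.sum_congr rfl fun k _ => Finset.sum_congr rfl fun j hj => ?_
      obtain ⟨i, rfl⟩ : ∃ i, j = i + 1 := ⟨j - 1, by have := (Finset.mem_Icc.mp hj).1; omega⟩
      have hh : w⁻¹ - α k = (1 - α k * w) / w := by field_simp
      have := h2 k
      rw [hh, div_pow, Nat.add_sub_cancel]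
      field_simp
      ring
    rw [hs] at hp
    apply mul_left_cancel₀ h0
    rw [one_div, eq_inv_mul_iff_mul_eq₀ hc0, ← hM] at hp
    linear_combination hp
  have cq : ∀ (k : Fin n) (a j : ℕ), ContinuousAt
      (fun w : ℂ => w ^ a / (1 - α k * w) ^ j) 0 := by
    intro k a j
    refine ContinuousAt.div (by fun_prop) (by fun_prop) (by simp)
  have z0 : - c * ∑ i, ∑ j, (1 : Matrix (Fin N) (Fin N) ℂ) i j = ∑ k, B k 1 := by
    have := aux_uniq (fun w => - c * ∑ i, ∑ j, ((1 - w • M)⁻¹) i j)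
      (fun w => ∑ k, ∑ j ∈ Finset.Icc 1 (e k), B k j * (w ^ (j - 1) / (1 - α k * w) ^ j))
      (continuousAt_const.mul (aux_cont_sum _ (aux_cont_inv M)))
      (tendsto_finsetSum _ fun k _ => tendsto_finsetSum _ fun j _ =>
        continuousAt_const.mul (cq k (j-1) j)) key
    simp only [zero_smul, sub_zero, inv_one] at this
    rw [this]
    refine Finset.sum_congr rfl fun k _ => ?_
    rw [Finset.sum_eq_single_of_mem 1 (Finset.mem_Icc.mpr ⟨le_rfl, he k⟩)]
    · simp
    · intro j hj hj1
      have := (Finset.mem_Icc.mp hj).1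
      have : j - 1 ≠ 0 := by omega
      simp [this]
  have key2 : ∀ᶠ w in nhdsWithin (0:ℂ) {0}ᶜ, - c * ∑ i, ∑ j, (M * (1 - w • M)⁻¹) i j =
      ∑ k, (B k 1 * (α k * (w ^ 0 / (1 - α k * w) ^ 1)) +
        ∑ j ∈ Finset.Icc 2 (e k), B k j * (w ^ (j - 2) / (1 - α k * w) ^ j)) := by
    filter_upwards [ev0, ev1, ev2, key] with w h0 h1 h2 h3
    apply mul_left_cancel₀ h0
    have h4 := congrArg (fun X : Matrix (Fin N) (Fin N) ℂ => ∑ i, ∑ j, X i j) (aux_sub M w h1)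
    simp only [Matrix.smul_apply, Matrix.sub_apply, smul_eq_mul, ← Finset.mul_sum,
      Finset.sum_sub_distrib] at h4
    have h5 : ∑ k, ∑ j ∈ Finset.Icc 1 (e k), B k j * (w ^ (j - 1) / (1 - α k * w) ^ j) -
        ∑ k, B k 1 = w * ∑ k, (B k 1 * (α k * (w ^ 0 / (1 - α k * w) ^ 1)) +
        ∑ j ∈ Finset.Icc 2 (e k), B k j * (w ^ (j - 2) / (1 - α k * w) ^ j)) := by
      rw [← Finset.sum_sub_distrib, Finset.mul_sum]
      refine Finset.sum_congr rfl fun k _ => ?_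
      rw [← Finset.add_sum_Ioc_eq_sum_Icc (he k), mul_add, Finset.mul_sum]
      have hI : Finset.Ioc 1 (e k) = Finset.Icc 2 (e k) := by ext x; simp; omega
      have h6 : ∑ j ∈ Finset.Icc 2 (e k), B k j * (w ^ (j - 1) / (1 - α k * w) ^ j) =
          ∑ j ∈ Finset.Icc 2 (e k), w * (B k j * (w ^ (j - 2) / (1 - α k * w) ^ j)) := by
        refine Finset.sum_congr rfl fun j hj => ?_
        obtain ⟨i, rfl⟩ : ∃ i, j = i + 2 := ⟨j - 2, by have := (Finset.mem_Icc.mp hj).1; omega⟩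
        have : i + 2 - 1 = i + 1 := by omega
        rw [this, Nat.add_sub_cancel]
        ring
      rw [hI, h6]
      have := h2 k
      have h7 : B k 1 * (w ^ (1 - 1) / (1 - α k * w) ^ 1) - B k 1 =
          w * (B k 1 * (α k * (w ^ 0 / (1 - α k * w) ^ 1))) := by
        simp only [Nat.sub_self, pow_zero, pow_one]
        field_simp
        ring
      linear_combination h7
    linear_combination h5 + h3 - z0 - c * (-1) * h4
  have fin := aux_uniq (fun w => - c * ∑ i, ∑ j, (M * (1 - w • M)⁻¹) i j)
      (fun w => ∑ k, (B k 1 * (α k * (w ^ 0 / (1 - α k * w) ^ 1)) +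
        ∑ j ∈ Finset.Icc 2 (e k), B k j * (w ^ (j - 2) / (1 - α k * w) ^ j)))
      (continuousAt_const.mul (aux_cont_sum _
      (ContinuousAt.mul continuousAt_const (aux_cont_inv M))))
      (tendsto_finsetSum _ fun k _ => Filter.Tendsto.add
        (Filter.Tendsto.const_mul _ (Filter.Tendsto.const_mul _ (cq k 0 1)))
        (tendsto_finsetSum _ fun j _ => Filter.Tendsto.const_mul _ (cq k (j-2) j))) key2
  simp only [zero_smul, sub_zero, inv_one, mul_one] at fin
  have hadj : c * ∑ i, ∑ j, M i j = (-1) ^ N * ∑ i, ∑ j, A.adjugate i j := by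
    rw [hM, Matrix.inv_def, Ring.inverse_eq_inv]
    simp only [Matrix.smul_apply, smul_eq_mul, ← Finset.mul_sum]
    rw [hc]; field_simp
  rw [← hadj]
  rw [← neg_inj, ← neg_mul, fin, ← Finset.sum_neg_distrib]
  refine Finset.sum_congr rfl fun k _ => ?_
  have : ∑ j ∈ Finset.Icc 2 (e k), B k j * ((0:ℂ) ^ (j - 2) / (1 - α k * 0) ^ j) =
      if e k = 1 then 0 else B k 2 := by
    split_ifs with h
    · simp [h]
    · have := he k
      rw [Finset.sum_eq_single_of_mem 2 (Finset.mem_Icc.mpr ⟨le_rfl, by omega⟩)]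
      · simp
      · intro j hj hj1
        have := (Finset.mem_Icc.mp hj).1
        have : j - 2 ≠ 0 := by omega
        simp [this]
  rw [this]
  simp
  ring
end

section
/- Let N ≥ 1 and let A be an N×N matrix over ℂ with det A ≠ 0. Suppose α_1, …, α_n are pairwise distinct nonzero complex numbers and e_1, …, e_n ≥ 1 are integers such that det(E − A·z) = (−1)^N · det A · Π_{k=1}^n (z − α_k)^{e_k} as polynomials in z, and suppose A_{k,j} (for 1 ≤ k ≤ n, 1 ≤ j ≤ e_k) are complex numbers such that for every complex z ∉ {α_1, …, α_n}: sum(adj(E − A·z)·A)/det(E − A·z) = (1/((−1)^N det A)) · Σ_{k=1}^n Σ_{j=1}^{e_k} A_{k,j}/(z − α_k)^j. Then Σ_{k=1}^n α_k · (−A_{k,1}/((−1)^N det A)) + (1/((−1)^N det A)) · Σ_{k=1}^n Σ_{j=1}^{e_k−1} (−1)^j · α_k^{j+1} · (Σ_{i=j}^{e_k−1} binom(i−1, j−1) · (−1)^{i−1} · (1/α_k)^{i+j} · A_{k,i+1}) = sum(A^{−1}). -/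
open Polynomial Matrix

lemma aux_term (a : ℂ) (j : ℕ) (hj : 1 ≤ j) :
    HasDerivAt (fun w : ℂ => w ^ (j - 1) / (1 - a * w) ^ j)
      (if j = 1 then a else if j = 2 then 1 else 0) 0 := by
  have h1 : HasDerivAt (fun w : ℂ => w ^ (j - 1)) (((j - 1 : ℕ) : ℂ) * 0 ^ (j - 1 - 1)) 0 :=
    hasDerivAt_pow _ _
  have h2 : HasDerivAt (fun w : ℂ => (1 - a * w)) (-a) 0 := by
    simpa using ((hasDerivAt_id (0 : ℂ)).const_mul a).const_sub 1
  have h3 := h1.fun_div (h2.fun_pow j) (by simp)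
  refine h3.congr_deriv ?_
  obtain ⟨j, rfl⟩ := Nat.exists_eq_add_of_le' hj
  rcases j with _ | _ | j
  · simp
  · simp
  · simp

lemma aux_inv {N : ℕ} (A : Matrix (Fin N) (Fin N) ℂ) (hA : A.det ≠ 0) (w : ℂ) (hw : w ≠ 0)
    (hd : (1 - w • A⁻¹).det ≠ 0) :
    (1 - w⁻¹ • A)⁻¹ * A = (-w) • (1 - w • A⁻¹)⁻¹ := by
  have hu : IsUnit A.det := isUnit_iff_ne_zero.2 hA
  have hR := Matrix.mul_nonsing_inv (1 - w • A⁻¹) (isUnit_iff_ne_zero.2 hd)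
  have hP : 1 - w⁻¹ • A = (-w⁻¹) • (A * (1 - w • A⁻¹)) := by
    rw [mul_sub, mul_one, Matrix.mul_smul, Matrix.mul_nonsing_inv _ hu, smul_sub, smul_smul]
    simp [hw]
    abel
  have : (1 - w⁻¹ • A)⁻¹ = (-w) • ((1 - w • A⁻¹)⁻¹ * A⁻¹) := by
    apply Matrix.inv_eq_right_inv
    rw [hP, Matrix.smul_mul, Matrix.mul_smul, smul_smul, Matrix.mul_assoc,
      ← Matrix.mul_assoc _ _ A⁻¹, hR, Matrix.one_mul, Matrix.mul_nonsing_inv _ hu]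
    simp [hw]
  rw [this, Matrix.smul_mul, Matrix.mul_assoc, Matrix.nonsing_inv_mul _ hu, Matrix.mul_one]

lemma aux_expand {N : ℕ} (M : Matrix (Fin N) (Fin N) ℂ) (w : ℂ) (hd : (1 - w • M).det ≠ 0) :
    (1 - w • M)⁻¹ = 1 + w • M + w ^ 2 • (M * M * (1 - w • M)⁻¹) := by
  have hR := Matrix.mul_nonsing_inv (1 - w • M) (isUnit_iff_ne_zero.2 hd)
  set R := (1 - w • M)⁻¹
  have h1 : R = 1 + w • (M * R) := by
    rw [sub_mul, Matrix.one_mul, Matrix.smul_mul] at hR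
    exact sub_eq_iff_eq_add.1 hR
  have h2 : M * R = M + w • (M * M * R) := by
    conv_lhs => rw [h1]
    rw [mul_add, mul_one, Matrix.mul_smul, Matrix.mul_assoc]
  conv_lhs => rw [h1, h2]
  rw [smul_add, smul_smul, ← add_assoc, sq]

lemma aux_detcont {N : ℕ} (M : Matrix (Fin N) (Fin N) ℂ) :
    Continuous (fun w : ℂ => (1 - w • M).det) := by
  apply Continuous.matrix_det
  fun_prop

lemma aux_r {N : ℕ} (M : Matrix (Fin N) (Fin N) ℂ) :
    ContinuousAt (fun w : ℂ => ∑ i, ∑ j, (M * M * (1 - w • M)⁻¹) i j) 0 := by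
  have h1 : Continuous (fun w : ℂ => ∑ i, ∑ j, (M * M * (1 - w • M).adjugate) i j) := by
    have : Continuous (fun w : ℂ => M * M * (1 - w • M).adjugate) := by
      apply Continuous.matrix_mul continuous_const
      apply Continuous.matrix_adjugate
      fun_prop
    exact continuous_finsetSum _ fun i _ => continuous_finsetSum _ fun j _ => this.matrix_elem i j
  have h2 : ContinuousAt (fun w : ℂ => ((1 - w • M).det)⁻¹ *
      ∑ i, ∑ j, (M * M * (1 - w • M).adjugate) i j) 0 :=
    ((aux_detcont M).continuousAt.inv₀ (by simp)).mul h1.continuousAt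
  convert h2 using 2 with w
  simp only [Matrix.inv_def, Ring.inverse_eq_inv', Matrix.mul_smul, Matrix.smul_apply, smul_eq_mul,
    Finset.mul_sum]

lemma aux_g (s t : ℂ) (r : ℂ → ℂ) (hr : ContinuousAt r 0) :
    HasDerivAt (fun w : ℂ => -(t + w * s + w ^ 2 * r w)) (-s) 0 := by
  have h1 : HasDerivAt (fun w : ℂ => w ^ 2 * r w) 0 0 := by
    rw [hasDerivAt_iff_tendsto_slope]
    have : Filter.Tendsto (fun w : ℂ => w * r w) (nhdsWithin 0 {0}ᶜ) (nhds 0) := by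
      have := (continuousAt_id.mul hr).tendsto
      simp at this
      exact this.mono_left nhdsWithin_le_nhds
    refine this.congr' ?_
    filter_upwards [self_mem_nhdsWithin] with w hw
    have hw : w ≠ 0 := hw
    simp [slope_def_field]
    field_simp
  have h2 : HasDerivAt (fun w : ℂ => t + w * s) s 0 := by
    simpa using ((hasDerivAt_id (0 : ℂ)).mul_const s).const_add t
  exact ((h2.fun_add h1).fun_neg).congr_deriv (by simp)

lemma aux_lhs_s11 (a : ℂ) (ha : a ≠ 0) (b : ℕ → ℂ) (e : ℕ) :
    ∑ j ∈ Finset.Icc 1 (e - 1), (-1 : ℂ) ^ j * a ^ (j + 1) *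
            ∑ i ∈ Finset.Icc j (e - 1),
              ((i - 1).choose (j - 1) : ℂ) * (-1) ^ (i - 1) * (1 / a) ^ (i + j) *
                b (i + 1) = if 2 ≤ e then -b 2 else 0 := by
  simp only [Finset.mul_sum]
  rw [Finset.sum_comm' (t' := Finset.Icc 1 (e - 1)) (s' := fun i => Finset.Icc 1 i)
    (by intro x y; simp only [Finset.mem_Icc]; omega)]
  have key : ∀ i ∈ Finset.Icc 1 (e - 1), ∑ j ∈ Finset.Icc 1 i, (-1 : ℂ) ^ j * a ^ (j + 1) *
      (((i - 1).choose (j - 1) : ℂ) * (-1) ^ (i - 1) * (1 / a) ^ (i + j) * b (i + 1)) =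
      if i = 1 then -b 2 else 0 := by
    intro i hi
    obtain ⟨m, rfl⟩ := Nat.exists_eq_add_of_le' (Finset.mem_Icc.1 hi).1
    have h0 : ∑ j ∈ Finset.range (m + 1), (-1 : ℂ) ^ j * (m.choose j : ℂ) = if m = 0 then 1 else 0 := by
      have := Int.alternating_sum_range_choose (n := m)
      exact_mod_cast congrArg (Int.cast : ℤ → ℂ) this
    rw [← Finset.Ico_add_one_right_eq_Icc, Finset.sum_Ico_eq_sum_range]
    have : ∀ j ∈ Finset.range (m + 1 + 1 - 1), (-1 : ℂ) ^ (1 + j) * a ^ (1 + j + 1) *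
      (((m + 1 - 1).choose (1 + j - 1) : ℂ) * (-1) ^ (m + 1 - 1) * (1 / a) ^ (m + 1 + (1 + j)) *
        b (m + 1 + 1)) = ((-1) ^ j * (m.choose j : ℂ)) * (-(-1) ^ m * (1 / a) ^ m * b (m + 2)) := by
      intro j _
      have e1 : 1 + j - 1 = j := by omega
      have e2 : a ^ (1 + j + 1) * (1 / a) ^ (m + 1 + (1 + j)) = (1 / a) ^ m := by
        rw [show m + 1 + (1 + j) = m + (1 + j + 1) by ring, pow_add (1 / a), mul_left_comm, ← mul_pow]
        simp [ha]
      rw [e1, Nat.add_sub_cancel, ← e2]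
      ring
    rw [Finset.sum_congr rfl this, ← Finset.sum_mul, Nat.add_sub_cancel, h0]
    by_cases hm : m = 0
    · subst hm; simp
    · simp [hm]
  rw [Finset.sum_congr rfl key, Finset.sum_ite_eq']
  simp only [Finset.mem_Icc]
  congr 1
  simp; omega

lemma aux_dsum (a : ℂ) (b : ℕ → ℂ) (e : ℕ) (he : 1 ≤ e) :
    ∑ j ∈ Finset.Icc 1 e, b j * (if j = 1 then a else if j = 2 then 1 else 0) =
      a * b 1 + if 2 ≤ e then b 2 else 0 := by
  have : ∀ j ∈ Finset.Icc 1 e, b j * (if j = 1 then a else if j = 2 then 1 else 0) =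
      (if j = 1 then a * b 1 else 0) + (if j = 2 then b 2 else 0) := by
    intro j _
    by_cases h1 : j = 1
    · subst h1; simp [mul_comm]
    · by_cases h2 : j = 2
      · subst h2; simp
      · simp [h1, h2]
  rw [Finset.sum_congr rfl this, Finset.sum_add_distrib, Finset.sum_ite_eq', Finset.sum_ite_eq']
  simp [he]

/-- With the same hypotheses as in the partial fraction setup
(`det A ≠ 0`, factorization of `det(E - A·z)`, partial fraction decomposition of
`sum(adj(E - A·z)·A)/det(E - A·z)` with coefficients `A_{k,j}`), we have
`Σ_k α_k · (-A_{k,1}/((-1)^N det A))`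
`+ (1/((-1)^N det A)) · Σ_k Σ_{j=1}^{e_k-1} (-1)^j α_k^{j+1} ·`
`(Σ_{i=j}^{e_k-1} binom(i-1,j-1) (-1)^{i-1} (1/α_k)^{i+j} A_{k,i+1}) = sum(A⁻¹)`. -/
theorem euler_characteristic_formula
    (N n : ℕ) (hN : 1 ≤ N) (A : Matrix (Fin N) (Fin N) ℂ) (hA : A.det ≠ 0)
    (α : Fin n → ℂ) (hα : ∀ k, α k ≠ 0) (hinj : Function.Injective α)
    (e : Fin n → ℕ) (he : ∀ k, 1 ≤ e k)
    (hfact : Matrix.det ((1 : Matrix (Fin N) (Fin N) ℂ[X]) -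
        (Polynomial.X : ℂ[X]) • A.map Polynomial.C) =
      Polynomial.C ((-1) ^ N * A.det) *
        ∏ k, (Polynomial.X - Polynomial.C (α k)) ^ (e k))
    (B : Fin n → ℕ → ℂ)
    (hpart : ∀ z : ℂ, (∀ k, z ≠ α k) →
      (∑ i, ∑ j, (Matrix.adjugate ((1 : Matrix (Fin N) (Fin N) ℂ) - z • A) * A) i j) /
          Matrix.det ((1 : Matrix (Fin N) (Fin N) ℂ) - z • A) =
        (1 / ((-1) ^ N * A.det)) *
          ∑ k, ∑ j ∈ Finset.Icc 1 (e k), B k j / (z - α k) ^ j) :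
    (∑ k, α k * (-(B k 1) / ((-1) ^ N * A.det))) +
      (1 / ((-1) ^ N * A.det)) *
        ∑ k, ∑ j ∈ Finset.Icc 1 (e k - 1),
          (-1 : ℂ) ^ j * α k ^ (j + 1) *
            ∑ i ∈ Finset.Icc j (e k - 1),
              ((i - 1).choose (j - 1) : ℂ) * (-1) ^ (i - 1) * (1 / α k) ^ (i + j) *
                B k (i + 1) =
      ∑ i, ∑ j, A⁻¹ i j := by
  have hc : ((-1) ^ N * A.det : ℂ) ≠ 0 := mul_ne_zero (by simp) hA
  set c : ℂ := (-1) ^ N * A.det with hcdef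
  clear_value c
  have hh : HasDerivAt (fun w : ℂ => (1 / c) * ∑ k, ∑ j ∈ Finset.Icc 1 (e k),
      B k j * (w ^ (j - 1) / (1 - α k * w) ^ j))
      ((1 / c) * ∑ k, ∑ j ∈ Finset.Icc 1 (e k),
        B k j * (if j = 1 then α k else if j = 2 then 1 else 0)) 0 := by
    apply HasDerivAt.const_mul
    apply HasDerivAt.fun_sum
    intro k _
    apply HasDerivAt.fun_sum
    intro j hj
    exact (aux_term (α k) j (Finset.mem_Icc.1 hj).1).const_mul _
  have hg := aux_g (∑ i, ∑ j, A⁻¹ i j) (∑ i, ∑ j, (1 : Matrix (Fin N) (Fin N) ℂ) i j)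
    _ (aux_r A⁻¹)
  have hev : (fun w : ℂ => -((∑ i, ∑ j, (1 : Matrix (Fin N) (Fin N) ℂ) i j) +
      w * (∑ i, ∑ j, A⁻¹ i j) + w ^ 2 * ∑ i, ∑ j, (A⁻¹ * A⁻¹ * (1 - w • A⁻¹)⁻¹) i j))
      =ᶠ[nhdsWithin 0 {0}ᶜ] (fun w : ℂ => (1 / c) * ∑ k, ∑ j ∈ Finset.Icc 1 (e k),
      B k j * (w ^ (j - 1) / (1 - α k * w) ^ j)) := by
    have ev1 : ∀ᶠ w : ℂ in nhdsWithin 0 {0}ᶜ, (1 - w • A⁻¹).det ≠ 0 :=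
      ((aux_detcont A⁻¹).continuousAt.eventually_ne (by simp)).filter_mono nhdsWithin_le_nhds
    have ev2 : ∀ᶠ w : ℂ in nhdsWithin 0 {0}ᶜ, ∀ k, 1 - α k * w ≠ 0 := by
      rw [Filter.eventually_all]
      intro k
      have : ContinuousAt (fun w : ℂ => 1 - α k * w) 0 := by fun_prop
      exact (this.eventually_ne (by simp)).filter_mono nhdsWithin_le_nhds
    filter_upwards [ev1, ev2, self_mem_nhdsWithin] with w hd hk hw
    have hw : w ≠ 0 := hw
    have hz := hpart w⁻¹ (by
      intro k hk'
      apply hk k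
      rw [← hk', inv_mul_cancel₀ hw, sub_self])
    have hL : (∑ i, ∑ j, (Matrix.adjugate ((1 : Matrix (Fin N) (Fin N) ℂ) - w⁻¹ • A) * A) i j) /
          Matrix.det ((1 : Matrix (Fin N) (Fin N) ℂ) - w⁻¹ • A) =
        ∑ i, ∑ j, ((1 - w⁻¹ • A)⁻¹ * A) i j := by
      simp only [Matrix.inv_def, Ring.inverse_eq_inv', Matrix.smul_mul, Matrix.smul_apply,
        smul_eq_mul, ← Finset.mul_sum]
      rw [div_eq_inv_mul]
    rw [hL, aux_inv A hA w hw hd, aux_expand A⁻¹ w hd] at hz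
    apply mul_left_cancel₀ hw
    have hl2 : ∑ i, ∑ j, ((-w) • (1 + w • A⁻¹ + w ^ 2 • (A⁻¹ * A⁻¹ * (1 - w • A⁻¹)⁻¹))) i j =
        w * -((∑ i, ∑ j, (1 : Matrix (Fin N) (Fin N) ℂ) i j) +
      w * (∑ i, ∑ j, A⁻¹ i j) + w ^ 2 * ∑ i, ∑ j, (A⁻¹ * A⁻¹ * (1 - w • A⁻¹)⁻¹) i j) := by
      simp only [Matrix.smul_apply, Matrix.add_apply, smul_eq_mul, ← Finset.mul_sum,
        Finset.sum_add_distrib]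
      ring
    rw [← hl2, hz, mul_left_comm]
    congr 1
    rw [Finset.mul_sum]
    refine Finset.sum_congr rfl fun k _ => ?_
    rw [Finset.mul_sum]
    refine Finset.sum_congr rfl fun j hj => ?_
    obtain ⟨m, rfl⟩ := Nat.exists_eq_add_of_le' (Finset.mem_Icc.1 hj).1
    have : w⁻¹ - α k = w⁻¹ * (1 - α k * w) := by field_simp
    have hkk := hk k
    rw [this, mul_pow, Nat.add_sub_cancel, inv_pow]
    generalize 1 - α k * w = d at hkk
    field_simp
    ring
  have heq := (hg.continuousAt.eventuallyEq_nhds_iff_eventuallyEq_nhdsNE hh.continuousAt).1 hev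
  have hfin := (hg.congr_of_eventuallyEq heq.symm).unique hh
  rw [neg_eq_iff_eq_neg] at hfin
  rw [hfin, Finset.sum_congr rfl fun k _ => aux_lhs_s11 (α k) (hα k) (B k) (e k),
    Finset.sum_congr rfl fun k _ => aux_dsum (α k) (B k) (e k) (he k), Finset.mul_sum,
    Finset.mul_sum, ← Finset.sum_neg_distrib, ← Finset.sum_add_distrib]
  refine Finset.sum_congr rfl fun k _ => ?_
  split_ifs <;> ring
end
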